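/- arXiv:0803.3373 — 3 statements merged into one kernel-verified Lean document; each statement's English description precedes it below -/
import Mathlib

section
/- Let k be a perfect field of characteristic p > 0 and let A be a finitely generated additive submonoid of ℤ^d (viewed inside ℚ^d) which generates ℤ^d as a group and satisfies A ∩ (−A) = {0}. Then the inclusion of monoid algebras k[A] ⊆ k[(1/p)·A] admits a k[A]-module retraction (i.e., the inclusion splits as a map of k[A]-modules) if and only if for every m ∈ ℤ^d with p·m ∈ A one has m ∈ A. -/
open AddMonoidAlgebra

/-- The `k`-linear projection of `k[G]` onto the elements supported on `s`. -/
noncomputable def supportProjection (k : Type*) {G : Type*} [Semiring k] (s : Set G) :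
    AddMonoidAlgebra k G →ₗ[k] AddMonoidAlgebra k G :=
  open Classical in
  (coeffLinearEquiv k).symm.toLinearMap ∘ₗ (Finsupp.supported k k s).subtype ∘ₗ
    Finsupp.restrictDom k k s ∘ₗ (coeffLinearEquiv k).toLinearMap

open Classical in
theorem coeff_supportProjection {k G : Type*} [Semiring k] (s : Set G)
    (v : AddMonoidAlgebra k G) :
    (supportProjection k s v).coeff = v.coeff.filter (· ∈ s) := rfl

open Classical in
theorem supportProjection_single {k G : Type*} [Semiring k] (s : Set G) (m : G) (r : k) :
    supportProjection k s (single m r) = if m ∈ s then single m r else 0 := by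
  apply coeff_injective
  split_ifs with h
  · simpa [coeff_supportProjection] using Finsupp.filter_single_of_pos (· ∈ s) h
  · simpa [coeff_supportProjection] using Finsupp.filter_single_of_neg (· ∈ s) h

/-- The projection of `k[G]` onto `k[H]`, for a subgroup `H` of `G`, is `k[H]`-linear. -/
theorem supportProjection_mul {k G : Type*} [CommSemiring k] [AddCommGroup G]
    (H : AddSubgroup G) {u : AddMonoidAlgebra k G} (hu : (↑u.coeff.support : Set G) ⊆ H)
    (v : AddMonoidAlgebra k G) :
    supportProjection k (H : Set G) (u * v) = u * supportProjection k (H : Set G) v := by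
  replace hu : u ∈ supported k k (H : Set G) := hu
  rw [supported_eq_span_single] at hu
  induction hu using Submodule.span_induction with
  | zero => simp
  | add x y _ _ hx hy => simp [add_mul, hx, hy]
  | smul c x _ hx => simp [hx]
  | mem x hx =>
    obtain ⟨m, hm, rfl⟩ := hx
    induction v using AddMonoidAlgebra.induction_linear with
    | zero => simp
    | add f g hf hg => simp only [mul_add, map_add, hf, hg]
    | single n r =>
      have hmn : m + n ∈ (H : Set G) ↔ n ∈ (H : Set G) := H.add_mem_cancel_left hm
      by_cases hn : n ∈ (H : Set G) <;>
        simp only [single_mul_single, supportProjection_single, hmn, hn, if_true, if_false,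
          mul_zero]

/-- The subgroup `ℤ^d` of `ℚ^d`. -/
def integerVectors (d : ℕ) : AddSubgroup (Fin d → ℚ) :=
  AddSubgroup.pi Set.univ fun _ => (Int.castAddHom ℚ).range

theorem mem_integerVectors {d : ℕ} {m : Fin d → ℚ} :
    m ∈ integerVectors d ↔ ∀ i, ∃ z : ℤ, m i = (z : ℚ) := by
  simp only [integerVectors, AddSubgroup.mem_pi, Set.mem_univ, true_imp_iff,
    AddMonoidHom.mem_range, Int.coe_castAddHom, eq_comm]

/-- Let `k` be a perfect field of characteristic `p > 0` and let `A` be a finitely generated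
additive submonoid of `ℤ^d` (viewed inside `ℚ^d`) which generates `ℤ^d` as a group and
satisfies `A ∩ (-A) = {0}`. We realize the monoid algebras `k[A] ⊆ k[(1/p)A]` inside the
monoid algebra `k[ℚ^d]` as the elements supported on `A`, resp. on `(1/p)A = {m | p•m ∈ A}`.
Then the inclusion `k[A] ⊆ k[(1/p)A]` admits a `k[A]`-module retraction — a `k`-linear map
`φ` sending `k[(1/p)A]` into `k[A]`, with `φ(u·v) = u·φ(v)` for `u ∈ k[A]`, `v ∈ k[(1/p)A]`,
and restricting to the identity on `k[A]` — if and only if every `m ∈ ℤ^d` with `p•m ∈ A`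
lies in `A` (i.e. `k[A]` is weakly normal). -/
theorem F_pure_iff_weaklyNormal (k : Type*) [Field k] (p : ℕ) [Fact p.Prime] [CharP k p]
    [PerfectField k] (d : ℕ) (A : AddSubmonoid (Fin d → ℚ))
    (hAint : ∀ a ∈ A, ∀ i, ∃ z : ℤ, a i = (z : ℚ))
    (hAfg : A.FG)
    (hAgen : ∀ m : Fin d → ℚ, (∀ i, ∃ z : ℤ, m i = (z : ℚ)) → ∃ a ∈ A, ∃ b ∈ A, m = a - b)
    (hAvertex : ∀ a ∈ A, -a ∈ A → a = 0) :
    (∃ φ : AddMonoidAlgebra k (Fin d → ℚ) →ₗ[k] AddMonoidAlgebra k (Fin d → ℚ),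
        (∀ v : AddMonoidAlgebra k (Fin d → ℚ), (↑v.coeff.support : Set (Fin d → ℚ)) ⊆
            {m : Fin d → ℚ | (p : ℚ) • m ∈ A} →
            (↑(φ v).coeff.support : Set (Fin d → ℚ)) ⊆ (A : Set (Fin d → ℚ))) ∧
        (∀ u v : AddMonoidAlgebra k (Fin d → ℚ),
            (↑u.coeff.support : Set (Fin d → ℚ)) ⊆ (A : Set (Fin d → ℚ)) →
            (↑v.coeff.support : Set (Fin d → ℚ)) ⊆ {m : Fin d → ℚ | (p : ℚ) • m ∈ A} →
            φ (u * v) = u * φ v) ∧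
        (∀ v : AddMonoidAlgebra k (Fin d → ℚ),
            (↑v.coeff.support : Set (Fin d → ℚ)) ⊆ (A : Set (Fin d → ℚ)) → φ v = v)) ↔
    (∀ m : Fin d → ℚ, (∀ i, ∃ z : ℤ, m i = (z : ℚ)) → (p : ℚ) • m ∈ A → m ∈ A) := by
  constructor
  · rintro ⟨φ, hφA, hφmul, hφid⟩ m hm hpm
    have support_single {s : Set (Fin d → ℚ)} {a : Fin d → ℚ} (ha : a ∈ s) :
        (↑(single a (1 : k)).coeff.support : Set (Fin d → ℚ)) ⊆ s :=
      Finsupp.single_mem_supported k (1 : k) ha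
    obtain ⟨a, ha, b, hb, rfl⟩ := hAgen m hm
    have hmul := hφmul (single b 1) (single (a - b) 1) (support_single hb) (support_single hpm)
    rw [single_mul_single, add_sub_cancel, one_mul, hφid _ (support_single ha)] at hmul
    have hfix : φ (single (a - b) 1) = single (a - b) 1 := by
      have h := congrArg (single (-b) (1 : k) * ·) hmul
      simpa [← mul_assoc, single_mul_single, ← one_def, sub_eq_neg_add] using h.symm
    refine hφA _ (support_single hpm) ?_
    simp [hfix]
  · intro hwn
    classical
    have hAH : (A : Set (Fin d → ℚ)) ⊆ integerVectors d :=
      fun a ha => mem_integerVectors.2 (hAint a ha)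
    refine ⟨supportProjection k (integerVectors d : Set (Fin d → ℚ)), fun v hv m hm => ?_,
      fun u v hu _ => supportProjection_mul _ (hu.trans hAH) v, fun v hv => ?_⟩
    · rw [coeff_supportProjection, Finsupp.support_filter, Finset.mem_coe, Finset.mem_filter] at hm
      exact hwn m (mem_integerVectors.1 hm.2) (hv hm.1)
    · apply coeff_injective
      rw [coeff_supportProjection, Finsupp.filter_eq_self_iff]
      exact fun m hm => hAH (hv (Finsupp.mem_support_iff.2 hm))
end

section
/- Let k be a field of characteristic p > 0 and let A be an additive submonoid of ℤ^d (viewed inside ℚ^d). Assume that for every m ∈ ℤ^d with p·m ∈ A one has m ∈ A. Then the k-linear map φ : k[(1/p)·A] → k[A] determined on basis elements by φ(x^m) = x^m if m ∈ A and φ(x^m) = 0 if m ∉ A satisfies φ(u·v) = u·φ(v) for all u ∈ k[A] and v ∈ k[(1/p)·A], and φ restricts to the identity on k[A]; in particular φ is a k[A]-module retraction of the inclusion k[A] ⊆ k[(1/p)·A]. -/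
open Finsupp
open scoped Classical

/-- The `k`-linear map on the monoid algebra `k[ℚ^d]` determined on basis elements by
`φ(xᵐ) = xᵐ` if `m ∈ A` and `φ(xᵐ) = 0` otherwise. -/
noncomputable def truncToMonoid (k : Type*) [Field k] {d : ℕ} (A : AddSubmonoid (Fin d → ℚ)) :
    AddMonoidAlgebra k (Fin d → ℚ) →ₗ[k] AddMonoidAlgebra k (Fin d → ℚ) :=
  letI : DecidablePred (· ∈ A) := Classical.decPred _
  { toFun := fun f => AddMonoidAlgebra.ofCoeff (Finsupp.filter (· ∈ A) f.coeff)
    map_add' := fun _ _ => congrArg AddMonoidAlgebra.ofCoeff Finsupp.filter_add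
    map_smul' := fun _ _ => congrArg AddMonoidAlgebra.ofCoeff Finsupp.filter_smul }

theorem truncToMonoid_single (k : Type*) [Field k] {d : ℕ} (A : AddSubmonoid (Fin d → ℚ))
    (m : Fin d → ℚ) (c : k) :
    truncToMonoid k A (AddMonoidAlgebra.single m c) =
      if m ∈ A then AddMonoidAlgebra.single m c else 0 := by
  split_ifs with hm
  · exact congrArg AddMonoidAlgebra.ofCoeff (Finsupp.filter_single_of_pos (· ∈ A) hm)
  · exact congrArg AddMonoidAlgebra.ofCoeff (Finsupp.filter_single_of_neg (· ∈ A) hm)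

/-- If each degree of `v` lies in `A` exactly when its translates by degrees of `u` do, then
truncation to `A` commutes with multiplication by `u`. -/
theorem truncToMonoid_mul (k : Type*) [Field k] {d : ℕ} (A : AddSubmonoid (Fin d → ℚ))
    (u v : AddMonoidAlgebra k (Fin d → ℚ))
    (h : ∀ a ∈ u.coeff.support, ∀ m ∈ v.coeff.support, a + m ∈ A ↔ m ∈ A) :
    truncToMonoid k A (u * v) = u * truncToMonoid k A v := by
  conv_lhs => rw [← u.sum_coeff_single, ← v.sum_coeff_single]
  conv_rhs => rw [← u.sum_coeff_single, ← v.sum_coeff_single]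
  simp only [Finsupp.sum, Finset.sum_mul_sum, map_sum]
  refine Finset.sum_congr rfl fun a ha => Finset.sum_congr rfl fun m hm => ?_
  rw [AddMonoidAlgebra.single_mul_single, truncToMonoid_single, truncToMonoid_single]
  simp only [h a ha m hm, mul_ite, mul_zero, AddMonoidAlgebra.single_mul_single]

/-- Let `k` be a field of characteristic `p > 0` and `A` an additive submonoid of `ℤ^d`
(viewed inside `ℚ^d`). If for every `m ∈ ℤ^d` with `p•m ∈ A` one has `m ∈ A` (weak
normality), then the `k`-linear map `φ : k[(1/p)A] → k[A]` with `φ(xᵐ) = xᵐ` for `m ∈ A`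
and `φ(xᵐ) = 0` otherwise is a `k[A]`-module retraction of the inclusion
`k[A] ⊆ k[(1/p)A]`: it maps `k[(1/p)A]` into `k[A]`, satisfies `φ(u·v) = u·φ(v)` for
`u ∈ k[A]`, `v ∈ k[(1/p)A]`, and restricts to the identity on `k[A]`. -/
theorem weaklyNormal_retraction (k : Type*) [Field k] (p : ℕ) [Fact p.Prime] [CharP k p]
    (d : ℕ) (A : AddSubmonoid (Fin d → ℚ))
    (hAint : ∀ a ∈ A, ∀ i, ∃ z : ℤ, a i = (z : ℚ))
    (hwn : ∀ m : Fin d → ℚ, (∀ i, ∃ z : ℤ, m i = (z : ℚ)) → (p : ℚ) • m ∈ A → m ∈ A) :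
    (∀ (m : Fin d → ℚ) (c : k),
        truncToMonoid k A (AddMonoidAlgebra.single m c) =
          if m ∈ A then AddMonoidAlgebra.single m c else 0) ∧
    (∀ v : AddMonoidAlgebra k (Fin d → ℚ), (↑v.coeff.support : Set (Fin d → ℚ)) ⊆
        {m : Fin d → ℚ | (p : ℚ) • m ∈ A} →
        (↑(truncToMonoid k A v).coeff.support : Set (Fin d → ℚ)) ⊆ (A : Set (Fin d → ℚ))) ∧
    (∀ u v : AddMonoidAlgebra k (Fin d → ℚ),
        (↑u.coeff.support : Set (Fin d → ℚ)) ⊆ (A : Set (Fin d → ℚ)) →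
        (↑v.coeff.support : Set (Fin d → ℚ)) ⊆ {m : Fin d → ℚ | (p : ℚ) • m ∈ A} →
        truncToMonoid k A (u * v) = u * truncToMonoid k A v) ∧
    (∀ v : AddMonoidAlgebra k (Fin d → ℚ),
        (↑v.coeff.support : Set (Fin d → ℚ)) ⊆ (A : Set (Fin d → ℚ)) → truncToMonoid k A v = v) := by
  refine ⟨truncToMonoid_single k A, fun v _ m hm => ?_, fun u v hu hv => ?_, fun v hv => ?_⟩
  · by_contra hmA
    exact Finsupp.mem_support_iff.1 hm (Finsupp.filter_apply_neg (· ∈ A) v.coeff hmA)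
  · refine truncToMonoid_mul k A u v fun a ha m hm =>
      ⟨fun ham => hwn m (fun i => ?_) (hv hm), A.add_mem (hu ha)⟩
    obtain ⟨y, hy⟩ := hAint a (hu ha) i
    obtain ⟨z, hz⟩ := hAint (a + m) ham i
    refine ⟨z - y, ?_⟩
    rw [Pi.add_apply, hy] at hz
    push_cast
    linarith
  · exact congrArg AddMonoidAlgebra.ofCoeff <|
      (Finsupp.filter_eq_self_iff (· ∈ A) v.coeff).2 fun m hm =>
        hv (Finsupp.mem_support_iff.2 hm)
end

section
/- Let k be a perfect field of characteristic p > 0, n ≥ 2, and let g be a formal power series in k[[x₀, …, x_n]] which involves only the variables x₀, …, x_{n−2} and has zero constant term. Set f = g + x_{n−1}·x_n and let R = k[[x₀, …, x_n]]/(f). Then R is F-pure: there exists an additive (ℤ-linear) map φ : R → R such that φ(a^p · b) = a · φ(b) for all a, b ∈ R and φ(1) = 1. -/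
namespace MvPowerSeries

variable {σ R : Type*} [CommRing R]

/-- The coefficients of `a ^ p` vanish outside the exponents divisible by `p`. -/
theorem exists_smul_eq_of_coeff_pow_ne_zero {p : ℕ} (hp : p ≠ 0) [ExpChar R p]
    {a : MvPowerSeries σ R} {d : σ →₀ ℕ} (h : coeff d (a ^ p) ≠ 0) : ∃ m, p • m = d := by
  have hdvd : ∀ i, p ∣ d i := fun i => by
    by_contra hi
    rw [← map_frobenius_expand p hp, coeff_map, coeff_expand_of_not_dvd p hp a hi, map_zero] at h
    exact h rfl
  exact ⟨d.mapRange (· / p) (Nat.zero_div p), Finsupp.ext fun i => by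
    simp [Nat.mul_div_cancel' (hdvd i)]⟩

theorem coeff_smul_pow {p : ℕ} (hp : p ≠ 0) [ExpChar R p] (a : MvPowerSeries σ R) (m : σ →₀ ℕ) :
    coeff (p • m) (a ^ p) = coeff m a ^ p := by
  rw [← map_frobenius_expand p hp, coeff_map, coeff_expand_smul, frobenius_def]

/-- The coefficient extraction `∑ cₘ xᵐ ↦ ∑ (c_{p m + e})^{1/p} xᵐ`. -/
noncomputable def frobeniusTrace (p : ℕ) [ExpChar R p] [PerfectRing R p] (e : σ →₀ ℕ) :
    MvPowerSeries σ R →+ MvPowerSeries σ R where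
  toFun s m := (frobeniusEquiv R p).symm (coeff (p • m + e) s)
  map_zero' := funext fun m => by rw [map_zero, map_zero]; rfl
  map_add' s t := funext fun m => by rw [map_add, map_add]; rfl

theorem coeff_frobeniusTrace (p : ℕ) [ExpChar R p] [PerfectRing R p] (e m : σ →₀ ℕ)
    (s : MvPowerSeries σ R) :
    coeff m (frobeniusTrace p e s) = (frobeniusEquiv R p).symm (coeff (p • m + e) s) :=
  rfl

theorem frobeniusTrace_pow_mul {p : ℕ} [ExpChar R p] [PerfectRing R p] {e : σ →₀ ℕ}
    (he : ∀ i, e i < p) (a b : MvPowerSeries σ R) :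
    frobeniusTrace p e (a ^ p * b) = a * frobeniusTrace p e b := by
  classical
  have hp : p ≠ 0 := expChar_ne_zero R p
  ext m
  rw [coeff_frobeniusTrace, RingEquiv.symm_apply_eq, coeff_mul, coeff_mul, map_sum]
  symm
  refine Finset.sum_of_injOn (fun q => (p • q.1, p • q.2 + e)) ?_ ?_ ?_ ?_
  · rintro ⟨i, j⟩ - ⟨i', j'⟩ - h
    simpa [nsmul_right_inj hp] using h
  · rintro ⟨i, j⟩ h
    simp only [Finset.mem_coe, Finset.HasAntidiagonal.mem_antidiagonal] at h ⊢
    rw [← add_assoc, ← smul_add, h]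
  · rintro ⟨i, j⟩ h hij
    rw [Finset.HasAntidiagonal.mem_antidiagonal] at h
    by_contra hne
    obtain ⟨i, rfl⟩ := exists_smul_eq_of_coeff_pow_ne_zero hp (left_ne_zero_of_mul hne)
    have him : i ≤ m := fun s => by
      have hs := DFunLike.congr_fun h s
      simp only [Finsupp.add_apply, Finsupp.smul_apply, smul_eq_mul] at hs
      have hlt : p * i s < p * (m s + 1) := by
        have := he s
        rw [mul_add]
        lia
      exact Nat.lt_succ_iff.mp (lt_of_mul_lt_mul_left' hlt)
    obtain ⟨c, rfl⟩ := exists_add_of_le him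
    refine hij ⟨(i, c), by simp, ?_⟩
    rw [smul_add, add_assoc] at h
    exact Prod.ext rfl (add_left_cancel h).symm
  · rintro ⟨i, j⟩ -
    rw [coeff_smul_pow hp, coeff_frobeniusTrace, map_mul, RingEquiv.apply_symm_apply,
      frobeniusEquiv_def]

/-- Powers of a series not involving the variable `u` do not involve `u`. -/
theorem coeff_pow_eq_zero_of_notInvolve {u : σ} {g : MvPowerSeries σ R}
    (hg : ∀ m : σ →₀ ℕ, m u ≠ 0 → coeff m g = 0) (r : ℕ) :
    ∀ m : σ →₀ ℕ, m u ≠ 0 → coeff m (g ^ r) = 0 := by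
  classical
  induction r with
  | zero =>
    intro m hm
    rw [pow_zero, coeff_one, if_neg]
    rintro rfl
    exact hm rfl
  | succ r ih =>
    intro m hm
    rw [pow_succ, coeff_mul]
    refine Finset.sum_eq_zero fun q hq => ?_
    rw [Finset.HasAntidiagonal.mem_antidiagonal] at hq
    by_cases h : q.1 u = 0
    · rw [hg q.2, mul_zero]
      intro h'
      exact hm (by rw [← hq, Finsupp.add_apply, h, h'])
    · rw [ih q.1 h, zero_mul]

theorem X_mul_X_pow_eq (u v : σ) (N : ℕ) :
    (X u * X v : MvPowerSeries σ R) ^ N =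
      monomial (N • (Finsupp.single u 1 + Finsupp.single v 1)) 1 := by
  rw [X, X, monomial_mul_monomial, one_mul, monomial_pow, one_pow]

/-- If `g` does not involve `u`, then in degrees at least `N` in `u` the `N`-th power of
`g + X u * X v` has the same coefficients as `(X u * X v) ^ N`. -/
theorem coeff_add_X_mul_X_pow {u v : σ} {g : MvPowerSeries σ R}
    (hg : ∀ m : σ →₀ ℕ, m u ≠ 0 → coeff m g = 0) (huv : u ≠ v) (N : ℕ) {m : σ →₀ ℕ}
    (hm : N ≤ m u) :
    coeff m ((g + X u * X v) ^ N) = coeff m ((X u * X v : MvPowerSeries σ R) ^ N) := by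
  classical
  rw [add_comm, add_pow, map_sum, Finset.sum_range_succ, Finset.sum_eq_zero, zero_add]
  · simp
  · intro j hj
    rw [Finset.mem_range] at hj
    rw [← Nat.cast_comm, ← nsmul_eq_mul, map_nsmul, X_mul_X_pow_eq, mul_comm,
      coeff_mul_monomial]
    split_ifs with hle
    · rw [coeff_pow_eq_zero_of_notInvolve hg, zero_mul, smul_zero]
      simpa [huv.symm] using! Nat.sub_ne_zero_of_lt (hj.trans_le hm)
    · rw [smul_zero]

/-- The extraction at `x_u^(p-1) x_v^(p-1)` sends `(g + X u * X v) ^ (p - 1)` to `1`. -/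
theorem frobeniusTrace_add_X_mul_X_pow {p : ℕ} [ExpChar R p] [PerfectRing R p] {u v : σ}
    {g : MvPowerSeries σ R} (hg : ∀ m : σ →₀ ℕ, m u ≠ 0 → coeff m g = 0) (huv : u ≠ v) :
    frobeniusTrace p ((p - 1) • (Finsupp.single u 1 + Finsupp.single v 1))
      ((g + X u * X v) ^ (p - 1)) = 1 := by
  classical
  have hp : p ≠ 0 := expChar_ne_zero R p
  ext m
  rw [coeff_frobeniusTrace, coeff_add_X_mul_X_pow hg huv, X_mul_X_pow_eq,
    coeff_monomial, coeff_one]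
  · by_cases hm : m = 0 <;> simp [hp, hm]
  · simp [huv.symm]

end MvPowerSeries

/-- The easy direction of Fedder's criterion, for a `p⁻¹`-linear map `ψ` with
`ψ (f ^ (p - 1)) = 1`. -/
theorem exists_frobenius_splitting_quotient {S : Type*} [CommRing S] {p : ℕ} (hp : p ≠ 0)
    (ψ : S →+ S) (hψ : ∀ a b, ψ (a ^ p * b) = a * ψ b) {f : S} (hf : ψ (f ^ (p - 1)) = 1) :
    ∃ φ : S ⧸ Ideal.span {f} →+ S ⧸ Ideal.span {f},
      (∀ a b, φ (a ^ p * b) = a * φ b) ∧ φ 1 = 1 := by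
  let q : S →+ S ⧸ Ideal.span {f} := (Ideal.Quotient.mk (Ideal.span {f})).toAddMonoidHom
  let θ : S →+ S ⧸ Ideal.span {f} := q.comp (ψ.comp (AddMonoidHom.mulLeft (f ^ (p - 1))))
  have hθ : ∀ s, θ s = Ideal.Quotient.mk _ (ψ (f ^ (p - 1) * s)) := fun _ => rfl
  have hker : ∀ s ∈ (Ideal.span {f}).toAddSubgroup, θ s = 0 := by
    intro s hs
    obtain ⟨c, rfl⟩ := Ideal.mem_span_singleton'.mp hs
    rw [hθ, mul_comm c, ← mul_assoc, ← pow_succ, Nat.sub_add_cancel (Nat.pos_of_ne_zero hp), hψ,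
      Ideal.Quotient.eq_zero_iff_mem]
    exact Ideal.mul_mem_right _ _ (Ideal.mem_span_singleton_self f)
  let φ : S ⧸ Ideal.span {f} →+ S ⧸ Ideal.span {f} := QuotientAddGroup.lift _ θ hker
  have hφ : ∀ s, φ (Ideal.Quotient.mk _ s) = Ideal.Quotient.mk _ (ψ (f ^ (p - 1) * s)) :=
    fun _ => rfl
  refine ⟨φ, fun a b => ?_, ?_⟩
  · obtain ⟨a, rfl⟩ := Ideal.Quotient.mk_surjective a
    obtain ⟨b, rfl⟩ := Ideal.Quotient.mk_surjective b
    rw [← map_pow, ← map_mul, hφ, hφ, mul_left_comm, hψ, map_mul]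
  · rw [← map_one (Ideal.Quotient.mk _), hφ, mul_one, hf]

/-- Let `k` be a perfect field of characteristic `p > 0`, `n ≥ 2`, and `g` a formal power
series in `k[[x₀,…,xₙ]]` involving only the variables `x₀, …, x_{n-2}` and with zero constant
term. Set `f = g + x_{n-1} * xₙ` and `R = k[[x₀,…,xₙ]]/(f)`. Then `R` is F-pure: there is an
additive map `φ : R → R` with `φ (a^p * b) = a * φ b` for all `a, b` and `φ 1 = 1`. -/
theorem simple_singularity_F_pure (k : Type*) [Field k] (p n : ℕ) [Fact p.Prime] [CharP k p]
    [PerfectField k] (hn : 2 ≤ n) (g : MvPowerSeries (Fin (n + 1)) k)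
    (hg : ∀ m : Fin (n + 1) →₀ ℕ,
      ¬(m ⟨n - 1, Nat.sub_lt_succ n 1⟩ = 0 ∧ m ⟨n, Nat.lt_succ_self n⟩ = 0) →
        MvPowerSeries.coeff m g = 0)
    (hg0 : MvPowerSeries.constantCoeff g = 0) :
    ∃ φ : (MvPowerSeries (Fin (n + 1)) k ⧸
            Ideal.span {g + MvPowerSeries.X ⟨n - 1, Nat.sub_lt_succ n 1⟩ *
              MvPowerSeries.X ⟨n, Nat.lt_succ_self n⟩}) →+
          (MvPowerSeries (Fin (n + 1)) k ⧸
            Ideal.span {g + MvPowerSeries.X ⟨n - 1, Nat.sub_lt_succ n 1⟩ *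
              MvPowerSeries.X ⟨n, Nat.lt_succ_self n⟩}),
      (∀ a b, φ (a ^ p * b) = a * φ b) ∧ φ 1 = 1 := by
  have hp : p.Prime := Fact.out
  have huv : (⟨n - 1, Nat.sub_lt_succ n 1⟩ : Fin (n + 1)) ≠ ⟨n, Nat.lt_succ_self n⟩ := by
    rw [Ne, Fin.mk.injEq]
    lia
  refine exists_frobenius_splitting_quotient hp.ne_zero _
    (MvPowerSeries.frobeniusTrace_pow_mul fun i => ?_)
    (MvPowerSeries.frobeniusTrace_add_X_mul_X_pow (p := p) (fun m hm => hg m fun h => hm h.1) huv)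
  have hpos := hp.pos
  simp only [Finsupp.smul_apply, Finsupp.add_apply, Finsupp.single_apply, smul_eq_mul]
  split_ifs with h₁ h₂
  · exact absurd (h₁.trans h₂.symm) huv
  all_goals lia
end
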